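/- There exist a constant C > 0 and ε₀ ∈ (0,1) such that for every ε ∈ (0, ε₀) the following holds. Let p, q, p', q' ∈ ℝ with Δ := q − p > 0 and |(p' − q') − Δ| ≤ εΔ, and define the portals α = p − Δ/ε^{2/3}, β = p − Δ/ε^{1/3}, γ = q + Δ/ε^{1/3}, δ = q + Δ/ε^{2/3} and α' = q' − Δ/ε^{2/3}, β' = q' − Δ/ε^{1/3}, γ' = p' + Δ/ε^{1/3}, δ' = p' + Δ/ε^{2/3}. Then there exists a map g : ℝ → ℝ² such that g(α) = (α', 0), g(β) = (γ', 0), g(γ) = (β', 0), g(δ) = (δ', 0), and for all t₁, t₂ ∈ ℝ, (1 − C/log²(1/ε))·|t₁ − t₂| ≤ ‖g(t₁) − g(t₂)‖ ≤ (1 + C/log²(1/ε))·|t₁ − t₂|. -/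

import Mathlib

/-- The point `(a, b) ∈ ℝ²` (Euclidean plane). -/
noncomputable def pt (a b : ℝ) : EuclideanSpace ℝ (Fin 2) :=
  (WithLp.equiv 2 (Fin 2 → ℝ)).symm ![a, b]

lemma clamp_lip (a b x y : ℝ) : |max a (min b x) - max a (min b y)| ≤ |x - y| := by
  calc |max a (min b x) - max a (min b y)| ≤ |min b x - min b y| := by
        have := abs_max_sub_max_le_max a (min b x) a (min b y)
        simpa using this
    _ ≤ |x - y| := by
        have := abs_min_sub_min_le_max b x b y
        simpa using this

lemma log_mean (s t : ℝ) (hs : 0 < s) (ht : 0 < t) :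
    s * t * (Real.log s - Real.log t) ^ 2 ≤ (s - t) ^ 2 := by
  have key : ∀ u : ℝ, u ^ 2 ≤ Real.sinh u ^ 2 := by
    intro u
    rcases le_total 0 u with h | h
    · exact pow_le_pow_left₀ h (Real.self_le_sinh_iff.2 h) 2
    · have := pow_le_pow_left₀ (neg_nonneg.2 h) (Real.self_le_sinh_iff.2 (neg_nonneg.2 h)) 2
      rw [Real.sinh_neg] at this
      nlinarith
  obtain ⟨a, rfl⟩ : ∃ a, s = Real.exp a := ⟨_, (Real.exp_log hs).symm⟩
  obtain ⟨b, rfl⟩ : ∃ b, t = Real.exp b := ⟨_, (Real.exp_log ht).symm⟩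
  rw [Real.log_exp, Real.log_exp]
  have h := key ((a - b) / 2)
  have e : (Real.exp a - Real.exp b) ^ 2
      = 4 * (Real.exp a * Real.exp b) * Real.sinh ((a - b) / 2) ^ 2 := by
    have h1 : Real.exp a = Real.exp (a / 2) ^ 2 := by rw [← Real.exp_nat_mul]; congr 1; push_cast; ring
    have h2 : Real.exp b = Real.exp (b / 2) ^ 2 := by rw [← Real.exp_nat_mul]; congr 1; push_cast; ring
    have h3 : Real.exp ((a - b) / 2) = Real.exp (a / 2) / Real.exp (b / 2) := by
      rw [← Real.exp_sub]; congr 1; ring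
    have h4 : Real.exp (-((a - b) / 2)) = Real.exp (b / 2) / Real.exp (a / 2) := by
      rw [← Real.exp_sub]; congr 1; ring
    rw [Real.sinh_eq, h3, h4, h1, h2]
    have := (Real.exp_pos (a / 2)).ne'
    have := (Real.exp_pos (b / 2)).ne'
    field_simp
    ring
  rw [e]
  have : 0 < Real.exp a * Real.exp b := by positivity
  nlinarith [mul_le_mul_of_nonneg_left h this.le]

lemma norm_pt_sub (a b c d : ℝ) : ‖pt a b - pt c d‖ ^ 2 = (a - c) ^ 2 + (b - d) ^ 2 := by
  rw [EuclideanSpace.norm_sq_eq]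
  simp [pt, Fin.sum_univ_two]

/-- If the angle is `k`-Lipschitz in the logarithm of the radius, the spiral is nearly isometric. -/
lemma spiral_sq (k : ℝ) (θ : ℝ → ℝ)
    (hθ : ∀ s t, |θ s - θ t| ≤ k * |Real.log s - Real.log t|) (m s t : ℝ) :
    |‖pt (m + s * Real.cos (θ s)) (s * Real.sin (θ s)) -
      pt (m + t * Real.cos (θ t)) (t * Real.sin (θ t))‖ ^ 2 - (s - t) ^ 2|
      ≤ k ^ 2 * (s - t) ^ 2 := by
  rw [norm_pt_sub]
  have e : (m + s * Real.cos (θ s) - (m + t * Real.cos (θ t))) ^ 2 +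
      (s * Real.sin (θ s) - t * Real.sin (θ t)) ^ 2 - (s - t) ^ 2
      = 2 * (s * t) * (1 - Real.cos (θ s - θ t)) := by
    rw [Real.cos_sub]
    linear_combination s ^ 2 * Real.sin_sq_add_cos_sq (θ s) + t ^ 2 * Real.sin_sq_add_cos_sq (θ t)
  rw [e]
  rcases eq_or_ne s 0 with rfl | hs
  · simp; positivity
  rcases eq_or_ne t 0 with rfl | ht
  · simp; positivity
  have h1 := Real.one_sub_sq_div_two_le_cos (x := θ s - θ t)
  have h2 := Real.cos_le_one (θ s - θ t)
  have h3 : (θ s - θ t) ^ 2 ≤ k ^ 2 * (Real.log s - Real.log t) ^ 2 := by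
    have := pow_le_pow_left₀ (abs_nonneg _) (hθ s t) 2
    rwa [mul_pow, sq_abs, sq_abs] at this
  have h4 := log_mean |s| |t| (abs_pos.2 hs) (abs_pos.2 ht)
  rw [Real.log_abs, Real.log_abs] at h4
  have h5 : (|s| - |t|) ^ 2 ≤ (s - t) ^ 2 := by
    rw [← sq_abs (s - t), ← sq_abs (|s| - |t|)]
    exact pow_le_pow_left₀ (abs_nonneg _) (abs_abs_sub_abs_le s t) 2
  have h6 : |2 * (s * t) * (1 - Real.cos (θ s - θ t))|
      = 2 * (|s| * |t|) * (1 - Real.cos (θ s - θ t)) := by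
    rw [abs_mul, abs_mul, abs_mul, abs_of_nonneg (by linarith : 0 ≤ 1 - Real.cos (θ s - θ t))]
    simp
  rw [h6]
  have hp : 0 ≤ |s| * |t| := by positivity
  calc 2 * (|s| * |t|) * (1 - Real.cos (θ s - θ t))
      ≤ (|s| * |t|) * (k ^ 2 * (Real.log s - Real.log t) ^ 2) := by
        nlinarith [mul_le_mul_of_nonneg_left (show 2 * (1 - Real.cos (θ s - θ t)) ≤
          k ^ 2 * (Real.log s - Real.log t) ^ 2 by linarith) hp]
    _ = k ^ 2 * (|s| * |t| * (Real.log s - Real.log t) ^ 2) := by ring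
    _ ≤ k ^ 2 * (s - t) ^ 2 := mul_le_mul_of_nonneg_left (h4.trans h5) (sq_nonneg k)

lemma le_of_sq_le_sq_aux {a b : ℝ} (h : a ^ 2 ≤ b ^ 2) (hb : 0 ≤ b) : a ≤ b :=
  abs_le_of_sq_le_sq' h hb |>.2

lemma norm_bounds (N K u : ℝ) (hN : 0 ≤ N) (hK : 0 ≤ K) (h : |N ^ 2 - u ^ 2| ≤ K * u ^ 2) :
    (1 - K) * |u| ≤ N ∧ N ≤ (1 + K) * |u| := by
  rw [abs_le, ← sq_abs u] at h
  have hu := abs_nonneg u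
  generalize |u| = v at *
  constructor
  · rcases le_total 1 K with h1 | h1
    · nlinarith
    · apply le_of_sq_le_sq_aux (b := N) ?_ hN
      nlinarith [mul_nonneg (mul_nonneg hK (sub_nonneg.2 h1)) (sq_nonneg v)]
  · apply le_of_sq_le_sq_aux ?_ (by positivity)
    nlinarith [mul_nonneg hK (sq_nonneg v), mul_nonneg (mul_nonneg hK hK) (sq_nonneg v)]

lemma ratio_bound (y a : ℝ) (hy : 1 ≤ y) (ha : a ≤ 1) :
    y * (a + y ^ 2) ≤ a + y ^ 4 := by
  have : 1 ≤ y ^ 3 := one_le_pow₀ hy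
  nlinarith [mul_nonneg (sub_nonneg.2 hy) (sub_nonneg.2 (ha.trans this))]

set_option maxHeartbeats 1600000 in
/-- **The rescaled spiral through the portals.** There are `C > 0` and `ε₀ ∈ (0,1)` such that
for every `ε ∈ (0, ε₀)` and all `p, q, p', q' ∈ ℝ` with `Δ := q - p > 0` and
`|(p' - q') - Δ| ≤ εΔ`, defining the portals
`α = p - Δ/ε^{2/3}`, `β = p - Δ/ε^{1/3}`, `γ = q + Δ/ε^{1/3}`, `δ = q + Δ/ε^{2/3}`,
`α' = q' - Δ/ε^{2/3}`, `β' = q' - Δ/ε^{1/3}`, `γ' = p' + Δ/ε^{1/3}`, `δ' = p' + Δ/ε^{2/3}`,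
there is a map `g : ℝ → ℝ²` with `g α = (α', 0)`, `g β = (γ', 0)`, `g γ = (β', 0)`,
`g δ = (δ', 0)`, and `(1 - C/log²(1/ε))|t₁-t₂| ≤ ‖g t₁ - g t₂‖ ≤ (1 + C/log²(1/ε))|t₁-t₂|`
for all `t₁, t₂ ∈ ℝ`. -/
theorem spiral_with_portals :
    ∃ C > (0 : ℝ), ∃ ε₀ : ℝ, 0 < ε₀ ∧ ε₀ < 1 ∧ ∀ ε : ℝ, 0 < ε → ε < ε₀ →
      ∀ p q p' q' : ℝ, ∀ Δ : ℝ, Δ = q - p → 0 < Δ → |(p' - q') - Δ| ≤ ε * Δ →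
        ∀ α β γ δ α' β' γ' δ' : ℝ,
          α = p - Δ / ε ^ ((2 : ℝ) / 3) → β = p - Δ / ε ^ ((1 : ℝ) / 3) →
          γ = q + Δ / ε ^ ((1 : ℝ) / 3) → δ = q + Δ / ε ^ ((2 : ℝ) / 3) →
          α' = q' - Δ / ε ^ ((2 : ℝ) / 3) → β' = q' - Δ / ε ^ ((1 : ℝ) / 3) →
          γ' = p' + Δ / ε ^ ((1 : ℝ) / 3) → δ' = p' + Δ / ε ^ ((2 : ℝ) / 3) →
          ∃ g : ℝ → EuclideanSpace ℝ (Fin 2),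
            g α = pt α' 0 ∧ g β = pt γ' 0 ∧ g γ = pt β' 0 ∧ g δ = pt δ' 0 ∧
            ∀ t₁ t₂ : ℝ,
              (1 - C / (Real.log (1 / ε)) ^ 2) * |t₁ - t₂| ≤ ‖g t₁ - g t₂‖ ∧
              ‖g t₁ - g t₂‖ ≤ (1 + C / (Real.log (1 / ε)) ^ 2) * |t₁ - t₂| := by
  refine ⟨1000, by norm_num, 1 / 2, by norm_num, by norm_num, ?_⟩
  intro ε hε hε2 p q p' q' Δ hΔ hΔ0 hc α β γ δ α' β' γ' δ' hα hβ hγ hδ hα' hβ' hγ' hδ'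
  obtain ⟨L, hL⟩ : ∃ L, L = Real.log (1 / ε) := ⟨_, rfl⟩
  have hL0 : 0 < L := by
    rw [hL]; apply Real.log_pos; rw [lt_div_iff₀ hε]; linarith
  rw [← hL]
  -- `y = ε^{-1/6}`
  obtain ⟨y, hy⟩ : ∃ y, y = Real.exp (L / 6) := ⟨_, rfl⟩
  have hεL : ε = Real.exp (-L) := by
    rw [hL, one_div, Real.log_inv, neg_neg, Real.exp_log hε]
  have hy1 : 1 < y := by rw [hy]; exact Real.one_lt_exp_iff.2 (by positivity)
  have hy0 : 0 < y := by linarith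
  have e1 : Δ / ε ^ ((1 : ℝ) / 3) = Δ * y ^ 2 := by
    rw [hεL, ← Real.exp_mul, div_eq_mul_inv, ← Real.exp_neg, hy, ← Real.exp_nat_mul]
    congr 2; push_cast; ring
  have e2 : Δ / ε ^ ((2 : ℝ) / 3) = Δ * y ^ 4 := by
    rw [hεL, ← Real.exp_mul, div_eq_mul_inv, ← Real.exp_neg, hy, ← Real.exp_nat_mul]
    congr 2; push_cast; ring
  rw [e2] at hα hδ hα' hδ'
  rw [e1] at hβ hγ hβ' hγ'
  obtain ⟨c, hcdef⟩ : ∃ c, c = ((p' - q') - Δ) / 2 := ⟨_, rfl⟩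
  have hcabs : |c| ≤ ε * Δ / 2 := by
    rw [hcdef, abs_div, abs_two]; linarith
  obtain ⟨hc1, hc2⟩ := abs_le.1 hcabs
  have hεΔ : ε * Δ ≤ Δ / 2 := by nlinarith
  have hy24 : y ^ 2 < y ^ 4 := pow_lt_pow_right₀ hy1 (by norm_num)
  have hy2 : 1 < y ^ 2 := one_lt_pow₀ hy1 (by norm_num)
  obtain ⟨r1, hr1⟩ : ∃ r, r = Δ / 2 + Δ * y ^ 2 := ⟨_, rfl⟩
  obtain ⟨r2, hr2⟩ : ∃ r, r = Δ / 2 + Δ * y ^ 4 := ⟨_, rfl⟩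
  have hr1Δ : Δ ≤ r1 := by nlinarith
  have hr1pos : 0 < r1 := by linarith
  have hr12 : r1 < r2 := by rw [hr1, hr2]; nlinarith
  have hR1 : 0 < r1 + c := by linarith
  have hR2 : 0 < r2 + c := by linarith
  obtain ⟨B, hB⟩ : ∃ B, B = Real.log (r2 + c) - Real.log (r1 + c) := ⟨_, rfl⟩
  have hBL : L / 6 ≤ B := by
    have h := ratio_bound y (1 / 2 + c / Δ) hy1.le (by
      have : c / Δ ≤ 1 / 2 := by rw [div_le_iff₀ hΔ0]; linarith
      linarith)
    have h' : y * (r1 + c) ≤ r2 + c := by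
      have := mul_le_mul_of_nonneg_left h hΔ0.le
      have ec : Δ * (c / Δ) = c := by field_simp
      rw [hr1, hr2]
      linarith [show Δ * (y * (1 / 2 + c / Δ + y ^ 2))
        = y * (Δ / 2 + Δ * y ^ 2 + Δ * (c / Δ)) by ring, 
        show Δ * (1 / 2 + c / Δ + y ^ 4) = Δ / 2 + Δ * y ^ 4 + Δ * (c / Δ) by ring, 
        show y * (Δ / 2 + Δ * y ^ 2 + Δ * (c / Δ)) = y * (Δ / 2 + Δ * y ^ 2 + c) by rw [ec]]
    have h2 := Real.log_le_log (by positivity) h'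
    rw [Real.log_mul hy0.ne' hR1.ne', hy, Real.log_exp] at h2
    linarith
  have hB0 : 0 < B := by linarith
  obtain ⟨k, hk⟩ : ∃ k, k = Real.pi / B := ⟨_, rfl⟩
  have hk0 : 0 ≤ k := by rw [hk]; positivity
  have hkB : k * B = Real.pi := by rw [hk]; field_simp
  have hkK : k ^ 2 ≤ 400 / L ^ 2 := by
    have h1 : k * L ≤ 20 := by
      have : k * (L / 6) ≤ k * B := mul_le_mul_of_nonneg_left hBL hk0
      have := Real.pi_lt_d2
      linarith
    rw [le_div_iff₀ (by positivity), ← mul_pow]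
    calc (k * L) ^ 2 ≤ 20 ^ 2 := pow_le_pow_left₀ (mul_nonneg hk0 hL0.le) h1 2
      _ = 400 := by norm_num
  have hεK : ε ≤ 4 / L ^ 2 := by
    have h1 : L / 2 ≤ Real.exp (L / 2) := by linarith [Real.add_one_le_exp (L / 2)]
    have h2 : ε * Real.exp (L / 2) ^ 2 = 1 := by
      rw [hεL, ← Real.exp_nat_mul, ← Real.exp_add, Real.exp_eq_one_iff]; push_cast; ring
    have h3 : (L / 2) ^ 2 ≤ Real.exp (L / 2) ^ 2 := pow_le_pow_left₀ (by positivity) h1 2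
    rw [le_div_iff₀ (by positivity)]
    have h4 := mul_le_mul_of_nonneg_left h3 hε.le
    linarith [show ε * (L / 2) ^ 2 = ε * L ^ 2 / 4 by ring]
  let θ : ℝ → ℝ := fun r => Real.pi - k * max 0 (min B (Real.log r - Real.log (r1 + c)))
  have hθ : ∀ s t, |θ s - θ t| ≤ k * |Real.log s - Real.log t| := by
    intro s t
    have h := clamp_lip 0 B (Real.log s - Real.log (r1 + c)) (Real.log t - Real.log (r1 + c))
    have e : θ s - θ t = k * -(max 0 (min B (Real.log s - Real.log (r1 + c))) -
      max 0 (min B (Real.log t - Real.log (r1 + c)))) := by simp only [θ]; ring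
    rw [e, abs_mul, abs_of_nonneg hk0, abs_neg]
    apply mul_le_mul_of_nonneg_left _ hk0
    simpa using h
  have hθ1 : θ (r1 + c) = Real.pi := by simp [θ, hB0.le]
  have hθ2 : θ (r2 + c) = 0 := by simp [θ, ← hB, hB0.le, hkB]
  have hθ1n : θ (-(r1 + c)) = Real.pi := by rw [← hθ1]; simp only [θ, Real.log_neg_eq_log]
  have hθ2n : θ (-(r2 + c)) = 0 := by rw [← hθ2]; simp only [θ, Real.log_neg_eq_log]
  let ρ : ℝ → ℝ := fun t => t + c * max (-1) (min 1 (t / r1))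
  have hρ : ∀ s t, |(ρ s - ρ t) - (s - t)| ≤ ε * |s - t| := by
    intro s t
    have h := clamp_lip (-1) 1 (s / r1) (t / r1)
    have e : (ρ s - ρ t) - (s - t) =
      c * (max (-1) (min 1 (s / r1)) - max (-1) (min 1 (t / r1))) := by simp only [ρ]; ring
    rw [← sub_div, abs_div, abs_of_pos hr1pos] at h
    rw [e, abs_mul]
    have h1 : |c| ≤ ε * r1 := by nlinarith
    calc _ ≤ (ε * r1) * (|s - t| / r1) := mul_le_mul h1 h (abs_nonneg _) (by positivity)
      _ = _ := by field_simp
  have d1 : r1 / r1 = 1 := div_self hr1pos.ne'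
  have d2 : 1 ≤ r2 / r1 := by rw [le_div_iff₀ hr1pos]; linarith
  have hρ1 : ρ r1 = r1 + c := by simp [ρ, d1]
  have hρ2 : ρ r2 = r2 + c := by
    simp only [ρ]; rw [min_eq_left d2, max_eq_right (by norm_num)]; ring
  have hρ1n : ρ (-r1) = -(r1 + c) := by
    simp only [ρ]; rw [neg_div, d1, min_eq_right (by norm_num), max_self]; ring
  have hρ2n : ρ (-r2) = -(r2 + c) := by
    simp only [ρ]; rw [neg_div, min_eq_right (by linarith), max_eq_left (by linarith)]; ring
  let m : ℝ := (p + q) / 2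
  let m' : ℝ := (p' + q') / 2
  let S : ℝ → EuclideanSpace ℝ (Fin 2) := fun t =>
    pt (m' + t * Real.cos (θ t)) (t * Real.sin (θ t))
  refine ⟨fun t => S (ρ (t - m)), ?_, ?_, ?_, ?_, ?_⟩
  · have : α - m = -r2 := by simp only [m]; rw [hα, hr2, hΔ]; ring
    simp only [this, hρ2n, S, hθ2n, Real.cos_zero, Real.sin_zero, mul_zero]
    congr 1; simp only [m']; rw [hα', hr2, hcdef]; ring
  · have : β - m = -r1 := by simp only [m]; rw [hβ, hr1, hΔ]; ring
    simp only [this, hρ1n, S, hθ1n, Real.cos_pi, Real.sin_pi, mul_zero]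
    congr 1; simp only [m']; rw [hγ', hr1, hcdef]; ring
  · have : γ - m = r1 := by simp only [m]; rw [hγ, hr1, hΔ]; ring
    simp only [this, hρ1, S, hθ1, Real.cos_pi, Real.sin_pi, mul_zero]
    congr 1; simp only [m']; rw [hβ', hr1, hcdef]; ring
  · have : δ - m = r2 := by simp only [m]; rw [hδ, hr2, hΔ]; ring
    simp only [this, hρ2, S, hθ2, Real.cos_zero, Real.sin_zero, mul_zero]
    congr 1; simp only [m']; rw [hδ', hr2, hcdef]; ring
  · intro t₁ t₂
    have hs := norm_bounds _ (k ^ 2) (ρ (t₁ - m) - ρ (t₂ - m)) (norm_nonneg _) (sq_nonneg k)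
      (spiral_sq k θ hθ m' (ρ (t₁ - m)) (ρ (t₂ - m)))
    change _ ≤ ‖S (ρ (t₁ - m)) - S (ρ (t₂ - m))‖ ∧ ‖S (ρ (t₁ - m)) - S (ρ (t₂ - m))‖ ≤ _ at hs
    have hr := hρ (t₁ - m) (t₂ - m)
    rw [show t₁ - m - (t₂ - m) = t₁ - t₂ by ring] at hr
    have hN := norm_nonneg (S (ρ (t₁ - m)) - S (ρ (t₂ - m)))
    change _ ≤ ‖S (ρ (t₁ - m)) - S (ρ (t₂ - m))‖ ∧ ‖S (ρ (t₁ - m)) - S (ρ (t₂ - m))‖ ≤ _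
    generalize ‖S (ρ (t₁ - m)) - S (ρ (t₂ - m))‖ = N at *
    generalize ρ (t₁ - m) - ρ (t₂ - m) = v at *
    generalize t₁ - t₂ = w at *
    have hv1 : |v| ≤ (1 + ε) * |w| := by
      have := abs_sub_abs_le_abs_sub v w
      linarith
    have hv2 : (1 - ε) * |w| ≤ |v| := by
      have := abs_sub_abs_le_abs_sub w v
      rw [abs_sub_comm w v] at this
      linarith
    have hw := abs_nonneg w
    have hC : 1000 / L ^ 2 = 2 * (400 / L ^ 2) + 50 * (4 / L ^ 2) := by ring
    rw [hC]
    have hk2 := sq_nonneg k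
    generalize k ^ 2 = K at *
    generalize 400 / L ^ 2 = P at *
    generalize 4 / L ^ 2 = Q at *
    constructor
    · rcases le_total 1 K with h1 | h1
      · have : (1 - (2 * P + 50 * Q)) * |w| ≤ 0 :=
          mul_nonpos_of_nonpos_of_nonneg (by linarith) hw
        linarith
      · calc (1 - (2 * P + 50 * Q)) * |w| ≤ ((1 - K) * (1 - ε)) * |w| := by
              apply mul_le_mul_of_nonneg_right _ hw
              nlinarith [mul_nonneg hk2 hε.le]
          _ = (1 - K) * ((1 - ε) * |w|) := by ring
          _ ≤ (1 - K) * |v| := mul_le_mul_of_nonneg_left hv2 (by linarith)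
          _ ≤ N := hs.1
    · calc N ≤ (1 + K) * |v| := hs.2
        _ ≤ (1 + K) * ((1 + ε) * |w|) := mul_le_mul_of_nonneg_left hv1 (by linarith)
        _ = ((1 + K) * (1 + ε)) * |w| := by ring
        _ ≤ (1 + (2 * P + 50 * Q)) * |w| := by
              apply mul_le_mul_of_nonneg_right _ hw
              nlinarith [mul_nonneg hk2 (by linarith : 0 ≤ 1 - ε)]
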